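/- Every finite exact potential game possesses at least one pure Nash equilibrium. Precisely: let S be a finite nonempty set of players, let each strategy set A_i be finite and nonempty, let u_i : (Π_{i∈S} A_i) → ℝ be the utilities, and suppose the game admits an exact potential φ. Then there exists a strategy profile a* such that for every player i and every strategy a'_i ∈ A_i, u_i(a*) ≥ u_i(a'_i, a*_{-i}). -/

import Mathlib

section PotentialGames

variable {ι : Type*} [DecidableEq ι] {A : ι → Type*} {R P : Type*}

/-- A pure Nash equilibrium of the game with payoffs `u`: no player gains by a unilateral
deviation. The profile `(a'_i, a_{-i})` is `Function.update a i a'`. -/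
def IsNashEquilibrium [LE R] (u : ι → (∀ k, A k) → R) (a : ∀ k, A k) : Prop :=
  ∀ (i : ι) (a' : A i), u i (Function.update a i a') ≤ u i a

/-- An exact potential: every unilateral deviation changes `φ` by as much as it changes the
deviator's payoff. -/
def IsExactPotential [Sub R] (u : ι → (∀ k, A k) → R) (φ : (∀ k, A k) → R) : Prop :=
  ∀ (i : ι) (a : ∀ k, A k) (a' : A i),
    u i (Function.update a i a') - u i a = φ (Function.update a i a') - φ a

/-- A generalized ordinal potential in the sense of Monderer and Shapley: every profitable
unilateral deviation increases `φ`. It compares profiles only by order, so `φ` need not take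
values in the type of payoffs. -/
def IsGeneralizedOrdinalPotential [LT R] [LT P] (u : ι → (∀ k, A k) → R)
    (φ : (∀ k, A k) → P) : Prop :=
  ∀ (i : ι) (a : ∀ k, A k) (a' : A i),
    u i a < u i (Function.update a i a') → φ a < φ (Function.update a i a')

theorem IsExactPotential.isGeneralizedOrdinalPotential [AddGroup R] [LT R] [AddRightStrictMono R]
    {u : ι → (∀ k, A k) → R} {φ : (∀ k, A k) → R} (hφ : IsExactPotential u φ) :
    IsGeneralizedOrdinalPotential u φ := by
  intro i a a' hgain
  rwa [← sub_pos, ← hφ i a a', sub_pos]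

theorem IsGeneralizedOrdinalPotential.isNashEquilibrium_of_maximalFor [LinearOrder R] [Preorder P]
    {u : ι → (∀ k, A k) → R} {φ : (∀ k, A k) → P} (hφ : IsGeneralizedOrdinalPotential u φ)
    {a : ∀ k, A k} (ha : MaximalFor (· ∈ Set.univ) φ a) : IsNashEquilibrium u a :=
  fun i a' => le_of_not_gt fun hgain => ha.not_gt (Set.mem_univ _) (hφ i a a' hgain)

theorem finite_exact_potential_game_has_nash_equilibrium_general
    [Nonempty (∀ k, A k)] [LinearOrder R] [Preorder P]
    {u : ι → (∀ k, A k) → R} {φ : (∀ k, A k) → P} (hφ : IsGeneralizedOrdinalPotential u φ)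
    (hfin : (Set.range φ).Finite) : ∃ a, IsNashEquilibrium u a := by
  rw [← Set.image_univ] at hfin
  obtain ⟨a, ha⟩ := hfin.exists_maximalFor' φ Set.univ Set.univ_nonempty
  exact ⟨a, hφ.isNashEquilibrium_of_maximalFor ha⟩

end PotentialGames

/-- Every finite exact potential game (finitely many players, finite nonempty
strategy sets, an exact potential `φ`) possesses a pure Nash equilibrium. -/
theorem finite_exact_potential_game_has_nash_equilibrium
    {ι : Type*} [Fintype ι] [Nonempty ι] [DecidableEq ι]
    {A : ι → Type*} [∀ i, Fintype (A i)] [∀ i, Nonempty (A i)]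
    (u : ∀ _ : ι, (∀ k, A k) → ℝ)
    (φ : (∀ k, A k) → ℝ)
    (hpot : ∀ (i : ι) (a : ∀ k, A k) (a' : A i),
      u i (Function.update a i a') - u i a = φ (Function.update a i a') - φ a) :
    ∃ astar : ∀ k, A k,
      ∀ (i : ι) (a' : A i), u i astar ≥ u i (Function.update astar i a') :=
  finite_exact_potential_game_has_nash_equilibrium_general
    (IsExactPotential.isGeneralizedOrdinalPotential hpot) (Set.finite_range φ)
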